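/- For the elephant random walk with memory parameter p ∈ [0, 1) on a Cayley graph that is the d-regular tree T_d (d ≥ 3), for any m ∈ [1, 2) there exists a constant C > 0 (depending on p, d, m) such that E|Δ_n/n − (d − 2)/d|^m ≤ C · r_n^{−m} for all n ≥ 1, where r_n = n^{1/2} if p < p_d, r_n = (n / log n)^{1/2} if p = p_d, and r_n = n^{d(1−p)/(d−1)} if p > p_d, with p_d = (d + 1)/(2d). -/

import Mathlib

open MeasureTheory ProbabilityTheory Filter

noncomputable section

/-- The Cayley graph of a group with respect to a finite set of generators. -/
def cayleyGraph {G : Type*} [Group G] (S : Finset G) : SimpleGraph G where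
  Adj x y := x ≠ y ∧ (y * x⁻¹ ∈ S ∨ x * y⁻¹ ∈ S)
  symm := by
    constructor
    rintro x y ⟨h1, h2⟩
    refine ⟨h1.symm, ?_⟩
    rcases h2 with h | h
    · exact Or.inr h
    · exact Or.inl h
  loopless := ⟨fun x h => h.1 rfl⟩

/-- The elephant random walk (ERW) with memory parameter `p` on the Cayley graph of a
group `G` with respect to a symmetric generating set `S` of cardinality `d`, not
containing the identity, whose Cayley graph is a tree (hence the `d`-regular tree
`T_d`).  The steps are `g 1, g 2, …` (the value of `g 0` is irrelevant).  The law of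
the process is characterised by: `g 1` is uniform on `S`, and, conditionally on the
first `n` steps being `s 1, …, s n`, the next step `g (n+1)` equals `a ∈ S` with
probability `p * N/n + ((1-p)/(d-1)) * (n-N)/n`, where `N = #{1 ≤ k ≤ n : s k = a}`;
this is precisely the probability that the walker, recalling a uniform past epoch
`D ∈ {1, …, n}`, repeats `g D` with probability `p` and takes any given other step
with probability `(1-p)/(d-1)`. -/
structure ERW (G : Type*) [Group G] [DecidableEq G] (d : ℕ) (p : ℝ)
    (Ω : Type*) [MeasurableSpace Ω] (P : Measure Ω) where
  S : Finset G
  card_S : S.card = d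
  symm_S : ∀ s ∈ S, s⁻¹ ∈ S
  one_not_mem : (1 : G) ∉ S
  tree : (cayleyGraph S).IsTree
  g : ℕ → Ω → G
  meas_g : ∀ n a, MeasurableSet {ω | g n ω = a}
  mem_S : ∀ n, 1 ≤ n → ∀ ω, g n ω ∈ S
  init : ∀ a ∈ S, (P {ω | g 1 ω = a}).toReal = 1 / d
  update : ∀ n, 1 ≤ n → ∀ s : ℕ → G, ∀ a ∈ S,
    (P ({ω | ∀ k ∈ Finset.Icc 1 n, g k ω = s k} ∩ {ω | g (n + 1) ω = a})).toReal
      = (p * ((((Finset.Icc 1 n).filter fun k => s k = a).card : ℝ) / n)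
          + (1 - p) / ((d : ℝ) - 1)
            * (((n : ℝ) - (((Finset.Icc 1 n).filter fun k => s k = a).card : ℝ)) / n))
        * (P {ω | ∀ k ∈ Finset.Icc 1 n, g k ω = s k}).toReal

namespace ERW

variable {G : Type*} [Group G] [DecidableEq G] {d : ℕ} {p : ℝ}
  {Ω : Type*} [MeasurableSpace Ω] {P : Measure Ω}

/-- The position `w n = g n ⋯ g 1` of the walk at time `n`. -/
def pos (E : ERW G d p Ω P) : ℕ → Ω → G
  | 0 => fun _ => 1
  | n + 1 => fun ω => E.g (n + 1) ω * E.pos n ω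

/-- `Δ n`: the (word-metric) distance of the walker from the root at time `n`. -/
def dist (E : ERW G d p Ω P) (n : ℕ) (ω : Ω) : ℕ :=
  (cayleyGraph E.S).dist 1 (E.pos n ω)

/-- `N n a`: the number of `a`-steps taken by time `n`. -/
def count (E : ERW G d p Ω P) (a : G) (n : ℕ) (ω : Ω) : ℕ :=
  ((Finset.Icc 1 n).filter fun k => E.g k ω = a).card

/-- `γ n`: the unique step decreasing the distance to the root by 1
(a junk value if the walker is at the root). -/
def gammaStep (E : ERW G d p Ω P) (n : ℕ) (ω : Ω) : G :=
  @Classical.epsilon G ⟨1⟩ fun s =>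
    s ∈ E.S ∧ (cayleyGraph E.S).dist 1 (s * E.pos n ω) + 1 = E.dist n ω

/-- `ℓ n = N n (γ n)` if the walker is away from the root, and `0` otherwise. -/
def ell (E : ERW G d p Ω P) (n : ℕ) (ω : Ω) : ℕ :=
  if E.pos n ω = 1 then 0 else E.count (E.gammaStep n ω) n ω

/-- `Ξ n = (1/n) ∑_{k=0}^{n-1} (ℓ k / k - 1(Δ k > 0)/d)` (with the convention
`ℓ 0 / 0 = 0`, automatic since division by zero yields zero). -/
def Xi (E : ERW G d p Ω P) (n : ℕ) (ω : Ω) : ℝ :=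
  (1 / n) * ∑ k ∈ Finset.range n,
    ((E.ell k ω : ℝ) / k - (if 0 < E.dist k ω then 1 else 0) / d)

/-- The natural filtration `F n` generated by the steps up to time `n`. -/
def filt (E : ERW G d p Ω P) (n : ℕ) : MeasurableSpace Ω :=
  ⨆ k ∈ Finset.Icc 1 n, MeasurableSpace.comap (E.g k) ⊤

/-- `G n = E[Δ (n+1) - Δ n | F n]`. -/
def drift (E : ERW G d p Ω P) (n : ℕ) : Ω → ℝ :=
  P[fun ω => ((E.dist (n + 1) ω : ℝ) - (E.dist n ω : ℝ)) | E.filt n]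

/-- The martingale differences `Y k = Δ k - Δ (k-1) - G (k-1)`. -/
def mdiff (E : ERW G d p Ω P) (k : ℕ) (ω : Ω) : ℝ :=
  (E.dist k ω : ℝ) - (E.dist (k - 1) ω : ℝ) - E.drift (k - 1) ω

/-- The martingale `M n = ∑_{k=1}^n Y k`. -/
def mart (E : ERW G d p Ω P) (n : ℕ) (ω : Ω) : ℝ :=
  ∑ k ∈ Finset.Icc 1 n, E.mdiff k ω

end ERW

/-- The rate `r n`: `√n` in the subcritical regime `p < p_d = (d+1)/(2d)`,
`√(n / log n)` in the critical regime `p = p_d`, and `n ^ (d(1-p)/(d-1))` in the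
supercritical regime `p > p_d`. -/
def rate (p : ℝ) (d : ℕ) (n : ℕ) : ℝ :=
  if p < ((d : ℝ) + 1) / (2 * d) then Real.sqrt n
  else if p = ((d : ℝ) + 1) / (2 * d) then Real.sqrt ((n : ℝ) / Real.log n)
  else (n : ℝ) ^ ((d : ℝ) * (1 - p) / ((d : ℝ) - 1))

/-!
The proof controls second moments. Conditionally on the past, the step at time `n + 1` equals a
given `a ∈ S` with probability `1/d + (α/n) (N n a - n/d)`, where `α = p - (1-p)/(d-1)`. Hence the
total second moment `V n` of the centred counts satisfies
`V (n+1) ≤ (1 + 2α/n) V n + d`, and the three regimes of the theorem are `2α < 1`, `2α = 1` and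
`2α > 1`. The distance decreases exactly when the walker, away from the root, takes the step `γ n`,
so the second moment `Y n` of the centred distance `Δ n - n (d-2)/d` has as its only drift a
correlation with the centred count of `γ n`. By AM-GM,
`Y (n+1) ≤ (1 + 1/(2n)) Y n + 8α² V n / n + 4`; since `1/2 < 1`, the distance fluctuates no more
than the counts do. At the root the missing backward step only helps, because the centred distance
is nonpositive there.
-/

/-! ### Distances in trees and Cayley graphs -/

section Graph

lemma exists_adj_dist_add_one_eq {V : Type*} {H : SimpleGraph V} (hH : H.Connected) {o x : V}
    (hx : x ≠ o) : ∃ y, H.Adj x y ∧ H.dist o y + 1 = H.dist o x := by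
  obtain ⟨walk, hwalk⟩ := hH.exists_walk_length_eq_dist x o
  cases walk with
  | nil => exact absurd rfl hx
  | @cons _ y _ hxy tail =>
    refine ⟨y, hxy, ?_⟩
    have htail : H.dist y o ≤ tail.length := SimpleGraph.dist_le tail
    have htriangle : H.dist x o ≤ H.dist x y + H.dist y o := hH.dist_triangle
    rw [SimpleGraph.dist_eq_one_iff_adj.2 hxy] at htriangle
    rw [SimpleGraph.Walk.length_cons] at hwalk
    rw [H.dist_comm (u := o), H.dist_comm (u := o)]
    omega

lemma eq_of_adj_of_dist_add_one_eq {V : Type*} {H : SimpleGraph V} (hH : H.IsTree) {o x y z : V}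
    (hxy : H.Adj x y) (hxz : H.Adj x z) (hy : H.dist o y + 1 = H.dist o x)
    (hz : H.dist o z + 1 = H.dist o x) : y = z := by
  have exists_path_via (v : V) (hxv : H.Adj x v) (hv : H.dist o v + 1 = H.dist o x) :
      ∃ path : H.Walk x o, path.IsPath ∧ path.snd = v := by
    obtain ⟨walk, hwalk⟩ := hH.connected.exists_walk_length_eq_dist v o
    refine ⟨.cons hxv walk, SimpleGraph.Walk.isPath_of_length_eq_dist _ ?_, by simp⟩
    rw [SimpleGraph.Walk.length_cons, hwalk, SimpleGraph.dist_comm, hv, SimpleGraph.dist_comm]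
  obtain ⟨pathy, hpathy, rfl⟩ := exists_path_via y hxy hy
  obtain ⟨pathz, hpathz, rfl⟩ := exists_path_via z hxz hz
  rw [(hH.existsUnique_path x o).unique hpathy hpathz]

variable {G : Type*} [Group G] {S : Finset G}

lemma cayleyGraph_adj_mul (hS : (1 : G) ∉ S) {s : G} (hs : s ∈ S) (x : G) :
    (cayleyGraph S).Adj x (s * x) :=
  ⟨fun h => hS (right_eq_mul.1 h ▸ hs), Or.inl (by simpa using hs)⟩

lemma exists_eq_mul_of_cayleyGraph_adj (hS : ∀ s ∈ S, s⁻¹ ∈ S) {x y : G}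
    (h : (cayleyGraph S).Adj x y) : ∃ s ∈ S, y = s * x := by
  rcases h.2 with hs | hs
  · exact ⟨_, hs, by simp⟩
  · exact ⟨_, hS _ hs, by simp⟩

end Graph

/-! ### Integrals of functions of a finite-valued observable -/

section FiniteObservable

variable {Ω ι : Type*} [MeasurableSpace Ω] {μ : Measure Ω} {X : Ω → ι}

lemma measurableSet_of_factorsThrough [Finite ι] (hX : ∀ i, MeasurableSet (X ⁻¹' {i})) {A : Set Ω}
    (hA : (· ∈ A).FactorsThrough X) : MeasurableSet A := by
  have hA_eq : A = ⋃ i ∈ X '' A, X ⁻¹' {i} := by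
    ext ω
    simp only [Set.mem_iUnion, Set.mem_image, Set.mem_preimage, Set.mem_singleton_iff]
    constructor
    · exact fun hω => ⟨X ω, ⟨ω, hω, rfl⟩, rfl⟩
    · rintro ⟨_, ⟨ω', hω', rfl⟩, hωω'⟩
      exact (hA hωω').mpr hω'
  rw [hA_eq]
  exact .biUnion (Set.to_countable _) fun i _ => hX i

lemma integrable_of_factorsThrough [Finite ι] [IsFiniteMeasure μ]
    (hX : ∀ i, MeasurableSet (X ⁻¹' {i})) {f : Ω → ℝ} (hf : f.FactorsThrough X) :
    Integrable f μ := by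
  let _ : MeasurableSpace ι := ⊤
  obtain ⟨F, rfl⟩ := (Function.factorsThrough_iff f).1 hf
  exact Integrable.of_finite.comp_measurable (measurable_to_countable' hX)

lemma integral_comp_eq_sum [Fintype ι] [IsFiniteMeasure μ] (hX : ∀ i, MeasurableSet (X ⁻¹' {i}))
    (F : ι → ℝ) : ∫ ω, F (X ω) ∂μ = ∑ i, μ.real (X ⁻¹' {i}) * F i := by
  let _ : MeasurableSpace ι := ⊤
  have hX' : Measurable X := measurable_to_countable' hX
  rw [← integral_map hX'.aemeasurable (measurable_of_finite F).aestronglyMeasurable,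
    integral_fintype .of_finite]
  simp only [smul_eq_mul, map_measureReal_apply hX' (MeasurableSet.singleton _)]

/-- `κ` plays the role of the conditional probability of `A` given `X`. -/
lemma setIntegral_eq_integral_mul_of_factorsThrough [Finite ι] [IsFiniteMeasure μ]
    (hX : ∀ i, MeasurableSet (X ⁻¹' {i})) {f κ : Ω → ℝ} (hf : f.FactorsThrough X)
    (hκ : κ.FactorsThrough X) {A : Set Ω}
    (hA : ∀ ω, f ω ≠ 0 → μ.real (X ⁻¹' {X ω} ∩ A) = κ ω * μ.real (X ⁻¹' {X ω})) :
    ∫ ω in A, f ω ∂μ = ∫ ω, f ω * κ ω ∂μ := by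
  have := Fintype.ofFinite ι
  obtain ⟨F, rfl⟩ := (Function.factorsThrough_iff f).1 hf
  obtain ⟨c, rfl⟩ := (Function.factorsThrough_iff κ).1 hκ
  simp only [Function.comp_apply] at hA ⊢
  rw [integral_comp_eq_sum hX F, integral_comp_eq_sum hX fun i => F i * c i]
  refine Finset.sum_congr rfl fun i _ => ?_
  rw [measureReal_restrict_apply (hX i)]
  by_cases hFi : F i = 0
  · simp [hFi]
  rcases (X ⁻¹' {i}).eq_empty_or_nonempty with hempty | ⟨ω, rfl⟩
  · simp [hempty]
  · rw [hA ω hFi]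
    ring

end FiniteObservable

section ProbabilityIntegral

variable {Ω : Type*} [MeasurableSpace Ω] {μ : Measure Ω} [IsProbabilityMeasure μ]

lemma integral_le_add_mul_add {f₁ f₀ h : Ω → ℝ} {c K : ℝ} (hf₁ : Integrable f₁ μ)
    (hf₀ : Integrable f₀ μ) (hh : Integrable h μ) (hle : ∀ ω, f₁ ω ≤ f₀ ω + c * h ω + K) :
    ∫ ω, f₁ ω ∂μ ≤ ∫ ω, f₀ ω ∂μ + c * ∫ ω, h ω ∂μ + K := by
  have hsum : Integrable (fun ω => f₀ ω + c * h ω) μ := hf₀.add (hh.const_mul c)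
  calc ∫ ω, f₁ ω ∂μ ≤ ∫ ω, (f₀ ω + c * h ω + K) ∂μ :=
        integral_mono hf₁ (hsum.add (integrable_const K)) hle
    _ = ∫ ω, f₀ ω ∂μ + c * ∫ ω, h ω ∂μ + K := by
        rw [integral_add hsum (integrable_const K), integral_add hf₀ (hh.const_mul c),
          integral_const_mul, integral_const, probReal_univ, one_smul]

lemma rpow_le_one_add_sq {t m : ℝ} (ht : 0 ≤ t) (hm0 : 0 ≤ m) (hm2 : m ≤ 2) :
    t ^ m ≤ 1 + t ^ 2 := by
  rcases le_total t 1 with ht1 | ht1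
  · linarith [Real.rpow_le_one ht ht1 hm0, sq_nonneg t]
  · have := Real.rpow_le_rpow_of_exponent_le ht1 hm2
    rw [Real.rpow_two] at this
    linarith

lemma integral_abs_rpow_le_one_add_integral_sq {f : Ω → ℝ} (hf : Integrable (fun ω => f ω ^ 2) μ)
    {m : ℝ} (hm0 : 0 ≤ m) (hm2 : m ≤ 2) :
    ∫ ω, |f ω| ^ m ∂μ ≤ 1 + ∫ ω, f ω ^ 2 ∂μ := by
  calc ∫ ω, |f ω| ^ m ∂μ ≤ ∫ ω, (1 + f ω ^ 2) ∂μ :=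
        integral_mono_of_nonneg (.of_forall fun ω => by positivity)
          ((integrable_const 1).add hf) (.of_forall fun ω => by
            simpa only [sq_abs] using rpow_le_one_add_sq (abs_nonneg (f ω)) hm0 hm2)
    _ = 1 + ∫ ω, f ω ^ 2 ∂μ := by
        rw [integral_add (integrable_const 1) hf, integral_const, probReal_univ, one_smul]

end ProbabilityIntegral

/-! ### Discrete Gronwall estimates -/

section Recurrence

lemma le_of_recurrence {z F h : ℕ → ℝ} {β : ℝ} (hβ : 0 ≤ β)
    (hz : ∀ n : ℕ, 1 ≤ n → z (n + 1) ≤ (1 + β / n) * z n + h n)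
    (hF : ∀ n : ℕ, 1 ≤ n → (1 + β / n) * F n + h n ≤ F (n + 1)) (h1 : z 1 ≤ F 1) :
    ∀ n : ℕ, 1 ≤ n → z n ≤ F n := by
  intro n hn
  induction n, hn using Nat.le_induction with
  | base => exact h1
  | succ n hn ih =>
    calc z (n + 1) ≤ (1 + β / n) * z n + h n := hz n hn
      _ ≤ (1 + β / n) * F n + h n := by gcongr
      _ ≤ F (n + 1) := hF n hn

lemma exists_le_mul_of_recurrence_of_lt_one {z g : ℕ → ℝ} {β K : ℝ} (hβ : β < 1)
    (hz0 : ∀ n, 0 ≤ z n) (hg : Monotone g) (hg1 : 1 ≤ g 1)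
    (hz : ∀ n : ℕ, 1 ≤ n → z (n + 1) ≤ (1 + β / n) * z n + K * g n) :
    ∃ B, 0 ≤ B ∧ ∀ n : ℕ, 1 ≤ n → z n ≤ B * (n * g n) := by
  set θ := max β 0
  have hθ0 : 0 ≤ θ := le_max_right _ _
  have hθ1 : 0 < 1 - θ := sub_pos.2 (max_lt hβ one_pos)
  have hzθ (n : ℕ) (hn : 1 ≤ n) : z (n + 1) ≤ (1 + θ / n) * z n + K * g n := by
    refine (hz n hn).trans ?_
    have := hz0 n
    gcongr
    exact le_max_left _ _
  set B := max (z 1) (K / (1 - θ))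
  have hB0 : 0 ≤ B := (hz0 1).trans (le_max_left _ _)
  have hKB : K ≤ B * (1 - θ) := (div_le_iff₀ hθ1).1 (le_max_right _ _)
  refine ⟨B, hB0, le_of_recurrence hθ0 hzθ (fun n hn => ?_) ?_⟩
  · have hn0 : (n : ℝ) ≠ 0 := by positivity
    have hg0 : 0 ≤ g n := zero_le_one.trans (hg1.trans (hg hn))
    calc (1 + θ / n) * (B * (n * g n)) + K * g n = (B * n + (B * θ + K)) * g n := by
          field_simp
          ring
      _ ≤ (B * n + B) * g n := by
          gcongr
          linarith
      _ = B * ((n + 1 : ℕ) * g n) := by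
          push_cast
          ring
      _ ≤ B * ((n + 1 : ℕ) * g (n + 1)) := by
          gcongr
          exact hg n.le_succ
  · rw [Nat.cast_one, one_mul]
    exact (le_max_left _ _).trans (le_mul_of_one_le_right hB0 hg1)

lemma one_le_succ_mul_log_succ_sub_log {n : ℕ} (hn : 1 ≤ n) :
    1 ≤ ((n : ℝ) + 1) * (Real.log (n + 1) - Real.log n) := by
  have hn0 : (0 : ℝ) < n := by positivity
  have hlog := Real.one_sub_inv_le_log_of_pos (x := ((n : ℝ) + 1) / n) (by positivity)
  rw [Real.log_div (by positivity) hn0.ne'] at hlog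
  calc (1 : ℝ) = ((n : ℝ) + 1) * (1 - (((n : ℝ) + 1) / n)⁻¹) := by
        field_simp
        ring
    _ ≤ _ := by gcongr

lemma exists_le_mul_log_of_recurrence {v : ℕ → ℝ} {K : ℝ} (hv0 : 0 ≤ v 1)
    (hv : ∀ n : ℕ, 1 ≤ n → v (n + 1) ≤ (1 + 1 / n) * v n + K) :
    ∃ A, 0 ≤ A ∧ ∀ n : ℕ, 1 ≤ n → v n ≤ A * (n * (1 + Real.log n)) := by
  set A := max (v 1) K with hA
  have hA0 : 0 ≤ A := hv0.trans (le_max_left _ _)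
  refine ⟨A, hA0, le_of_recurrence (h := fun _ => K) zero_le_one hv (fun n hn => ?_)
    (by simp [hA])⟩
  have hn0 : (n : ℝ) ≠ 0 := by positivity
  calc (1 + 1 / (n : ℝ)) * (A * (n * (1 + Real.log n))) + K
        = A * ((n + 1) * (1 + Real.log n)) + K := by field_simp
    _ ≤ A * ((n + 1) * (1 + Real.log n))
          + A * ((n + 1) * (Real.log (n + 1) - Real.log n)) := by
        gcongr
        exact (le_max_right _ _).trans
          (le_mul_of_one_le_right hA0 (one_le_succ_mul_log_succ_sub_log hn))
    _ = A * ((n + 1 : ℕ) * (1 + Real.log (n + 1 : ℕ))) := by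
        push_cast
        ring

lemma one_add_div_mul_rpow_le {β : ℝ} (hβ : 1 ≤ β) {x : ℝ} (hx : 0 < x) :
    (1 + β / x) * x ^ β ≤ (x + 1) ^ β := by
  have hbernoulli : 1 + β * (1 / x) ≤ (1 + 1 / x) ^ β :=
    one_add_mul_self_le_rpow_one_add (by linarith [one_div_pos.2 hx]) hβ
  calc (1 + β / x) * x ^ β = (1 + β * (1 / x)) * x ^ β := by ring
    _ ≤ (1 + 1 / x) ^ β * x ^ β := by gcongr
    _ = (x + 1) ^ β := by
        rw [← Real.mul_rpow (by positivity) hx.le, add_mul, one_div_mul_cancel hx.ne', one_mul]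

/-- Adding the linear term `K / (β - 1) * n` to `v` makes the recurrence homogeneous. -/
lemma exists_le_mul_rpow_of_recurrence {v : ℕ → ℝ} {β K : ℝ} (hβ : 1 < β) (hK : 0 ≤ K)
    (hv0 : 0 ≤ v 1) (hv : ∀ n : ℕ, 1 ≤ n → v (n + 1) ≤ (1 + β / n) * v n + K) :
    ∃ A, 0 ≤ A ∧ ∀ n : ℕ, 1 ≤ n → v n ≤ A * (n : ℝ) ^ β := by
  have hβ1 : 0 < β - 1 := sub_pos.2 hβ
  set b := K / (β - 1)
  have hb0 : 0 ≤ b := by positivity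
  have hbK : b * (β - 1) = K := div_mul_cancel₀ K hβ1.ne'
  have hA0 : 0 ≤ v 1 + b := add_nonneg hv0 hb0
  have hbound : ∀ n : ℕ, 1 ≤ n → v n + b * n ≤ (v 1 + b) * (n : ℝ) ^ β := by
    refine le_of_recurrence (h := 0) (zero_le_one.trans hβ.le) (fun n hn => ?_) (fun n hn => ?_)
      (by simp)
    · have hn0 : (n : ℝ) ≠ 0 := by positivity
      calc v (n + 1) + b * (n + 1 : ℕ) ≤ (1 + β / n) * v n + K + b * (n + 1 : ℕ) := by
            gcongr
            exact hv n hn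
        _ = (1 + β / n) * (v n + b * n) + (0 : ℕ → ℝ) n := by
            rw [← hbK, Pi.zero_apply]
            push_cast
            field_simp
            ring
    · have hn0 : (0 : ℝ) < n := by positivity
      rw [Pi.zero_apply, add_zero, mul_left_comm]
      push_cast
      gcongr
      exact one_add_div_mul_rpow_le hβ.le hn0
  refine ⟨v 1 + b, hA0, fun n hn => le_trans ?_ (hbound n hn)⟩
  exact le_add_of_nonneg_right (by positivity)

/-- The order of growth of `v n / n` when `v (n + 1) ≤ (1 + β / n) * v n + K`. In the critical case
`1 + log n` is used rather than `log n` so that the value at `n = 1` is positive. -/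
def growthFactor (β : ℝ) (n : ℕ) : ℝ :=
  if β < 1 then 1 else if β = 1 then 1 + Real.log n else (n : ℝ) ^ (β - 1)

lemma growthFactor_one (β : ℝ) : growthFactor β 1 = 1 := by
  simp [growthFactor]

lemma monotone_growthFactor (β : ℝ) : Monotone (growthFactor β) := by
  intro k n hkn
  unfold growthFactor
  split_ifs with hlt heq
  · exact le_rfl
  · rcases k.eq_zero_or_pos with rfl | hk
    · simpa using Real.log_natCast_nonneg n
    · gcongr
  · have hβ : 0 ≤ β - 1 := by linarith
    gcongr

lemma one_le_growthFactor (β : ℝ) {n : ℕ} (hn : 1 ≤ n) : 1 ≤ growthFactor β n :=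
  (growthFactor_one β).ge.trans (monotone_growthFactor β hn)

lemma exists_le_mul_growthFactor_of_recurrence {v : ℕ → ℝ} {β K : ℝ} (hK : 0 ≤ K)
    (hv0 : ∀ n, 0 ≤ v n) (hv : ∀ n : ℕ, 1 ≤ n → v (n + 1) ≤ (1 + β / n) * v n + K) :
    ∃ A, 0 ≤ A ∧ ∀ n : ℕ, 1 ≤ n → v n ≤ A * (n * growthFactor β n) := by
  unfold growthFactor
  rcases lt_trichotomy β 1 with hβ | rfl | hβ
  · simp only [if_pos hβ]
    exact exists_le_mul_of_recurrence_of_lt_one hβ hv0 monotone_const le_rfl (by simpa using hv)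
  · simp only [lt_irrefl, if_false, if_true]
    exact exists_le_mul_log_of_recurrence (hv0 1) hv
  · simp only [if_neg hβ.not_gt, if_neg hβ.ne']
    obtain ⟨A, hA0, hA⟩ := exists_le_mul_rpow_of_recurrence hβ hK (hv0 1) hv
    refine ⟨A, hA0, fun n hn => (hA n hn).trans_eq ?_⟩
    have hn0 : (n : ℝ) ≠ 0 := by positivity
    rw [Real.rpow_sub_one hn0, mul_div_cancel₀ _ hn0]

lemma exists_le_mul_growthFactor_of_driven_recurrence {v y : ℕ → ℝ} {β θ K L M : ℝ} (hθ : θ < 1)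
    (hK : 0 ≤ K) (hL : 0 ≤ L) (hM : 0 ≤ M) (hv0 : ∀ n, 0 ≤ v n) (hy0 : ∀ n, 0 ≤ y n)
    (hv : ∀ n : ℕ, 1 ≤ n → v (n + 1) ≤ (1 + β / n) * v n + K)
    (hy : ∀ n : ℕ, 1 ≤ n → y (n + 1) ≤ (1 + θ / n) * y n + (L * (v n / n) + M)) :
    ∃ B, 0 ≤ B ∧ ∀ n : ℕ, 1 ≤ n → y n ≤ B * (n * growthFactor β n) := by
  obtain ⟨A, -, hA⟩ := exists_le_mul_growthFactor_of_recurrence hK hv0 hv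
  refine exists_le_mul_of_recurrence_of_lt_one (K := L * A + M) hθ hy0
    (monotone_growthFactor β) (growthFactor_one β).ge fun n hn => (hy n hn).trans ?_
  have hvn : v n / n ≤ A * growthFactor β n := by
    rw [div_le_iff₀ (by positivity)]
    exact (hA n hn).trans_eq (by ring)
  have hMn : M ≤ M * growthFactor β n := le_mul_of_one_le_right hM (one_le_growthFactor β hn)
  rw [add_mul (L * A), mul_assoc L]
  gcongr

end Recurrence

/-! ### The memory coefficient and the rate -/

section Rate

/-- The memory coefficient `α`: the factor by which an excess of `a`-steps in the past biases the
next step of the walk towards `a`. -/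
def memoryCoeff (p : ℝ) (d : ℕ) : ℝ := p - (1 - p) / ((d : ℝ) - 1)

variable {d : ℕ}

lemma one_sub_memoryCoeff (hd : 2 ≤ d) (p : ℝ) :
    1 - memoryCoeff p d = (d : ℝ) * (1 - p) / ((d : ℝ) - 1) := by
  have hd2 : (2 : ℝ) ≤ d := by exact_mod_cast hd
  have hd1 : (d : ℝ) - 1 ≠ 0 := by linarith
  unfold memoryCoeff
  field_simp
  ring

lemma two_mul_memoryCoeff_sub_one (hd : 2 ≤ d) (p : ℝ) :
    2 * memoryCoeff p d - 1 = 2 * d / (d - 1) * (p - ((d : ℝ) + 1) / (2 * d)) := by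
  have hd2 : (2 : ℝ) ≤ d := by exact_mod_cast hd
  have hd1 : (d : ℝ) - 1 ≠ 0 := by linarith
  unfold memoryCoeff
  field_simp
  ring

lemma two_mul_memoryCoeff_lt_one_iff (hd : 2 ≤ d) (p : ℝ) :
    2 * memoryCoeff p d < 1 ↔ p < ((d : ℝ) + 1) / (2 * d) := by
  have hd2 : (2 : ℝ) ≤ d := by exact_mod_cast hd
  have hpos : 0 < 2 * (d : ℝ) / (d - 1) := div_pos (by linarith) (by linarith)
  rw [← sub_neg, two_mul_memoryCoeff_sub_one hd, ← smul_eq_mul, smul_neg_iff_of_pos_left hpos,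
    sub_neg]

lemma two_mul_memoryCoeff_eq_one_iff (hd : 2 ≤ d) (p : ℝ) :
    2 * memoryCoeff p d = 1 ↔ p = ((d : ℝ) + 1) / (2 * d) := by
  have hd2 : (2 : ℝ) ≤ d := by exact_mod_cast hd
  have hpos : 0 < 2 * (d : ℝ) / (d - 1) := div_pos (by linarith) (by linarith)
  rw [← sub_eq_zero, two_mul_memoryCoeff_sub_one hd, mul_eq_zero_iff_left hpos.ne', sub_eq_zero]

lemma rate_nonneg (p : ℝ) (d n : ℕ) : 0 ≤ rate p d n := by
  unfold rate
  split_ifs <;> positivity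

lemma div_log_mul_one_add_log_le {n : ℕ} (hn : 1 ≤ n) :
    (n : ℝ) / Real.log n * (1 + Real.log n) ≤ (1 / Real.log 2 + 1) * n := by
  have hlog2 : 0 < Real.log 2 := Real.log_pos one_lt_two
  rcases hn.eq_or_lt with rfl | hn2
  · simp only [Nat.cast_one, Real.log_one, div_zero, zero_mul]
    positivity
  · have hle : Real.log 2 ≤ Real.log n := Real.log_le_log two_pos (by exact_mod_cast hn2)
    have hlog : 0 < Real.log n := hlog2.trans_le hle
    calc (n : ℝ) / Real.log n * (1 + Real.log n) = (1 / Real.log n + 1) * n := by field_simp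
      _ ≤ (1 / Real.log 2 + 1) * n := by gcongr

lemma exists_rate_sq_mul_growthFactor_le (hd : 2 ≤ d) (p : ℝ) :
    ∃ C, 0 ≤ C ∧ ∀ n : ℕ, 1 ≤ n →
      rate p d n ^ 2 * growthFactor (2 * memoryCoeff p d) n ≤ C * n := by
  simp only [rate, growthFactor, two_mul_memoryCoeff_lt_one_iff hd,
    two_mul_memoryCoeff_eq_one_iff hd]
  split_ifs with hsub hcrit
  · refine ⟨1, zero_le_one, fun n _ => ?_⟩
    rw [Real.sq_sqrt n.cast_nonneg, mul_one, one_mul]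
  · refine ⟨1 / Real.log 2 + 1, by positivity, fun n hn => ?_⟩
    rw [Real.sq_sqrt (div_nonneg n.cast_nonneg (Real.log_natCast_nonneg n))]
    exact div_log_mul_one_add_log_le hn
  · refine ⟨1, zero_le_one, fun n hn => ?_⟩
    have hn0 : (0 : ℝ) < n := by positivity
    have hexp : (1 - memoryCoeff p d) * (2 : ℕ) + (2 * memoryCoeff p d - 1) = 1 := by
      push_cast
      ring
    rw [← one_sub_memoryCoeff hd, ← Real.rpow_mul_natCast hn0.le, ← Real.rpow_add hn0, hexp,
      Real.rpow_one, one_mul]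

end Rate

namespace ERW

variable {G : Type*} [Group G] [DecidableEq G] {d : ℕ} {p : ℝ}
  {Ω : Type*} [MeasurableSpace Ω] {P : Measure Ω} (E : ERW G d p Ω P)

/-! ### Increments of the distance -/

lemma gammaStep_spec {n : ℕ} {ω : Ω} (h : E.pos n ω ≠ 1) :
    E.gammaStep n ω ∈ E.S ∧
      (cayleyGraph E.S).dist 1 (E.gammaStep n ω * E.pos n ω) + 1 = E.dist n ω := by
  obtain ⟨y, hy, hdist⟩ := exists_adj_dist_add_one_eq E.tree.connected h
  obtain ⟨s, hs, rfl⟩ := exists_eq_mul_of_cayleyGraph_adj E.symm_S hy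
  exact Classical.epsilon_spec (p := fun s =>
    s ∈ E.S ∧ (cayleyGraph E.S).dist 1 (s * E.pos n ω) + 1 = E.dist n ω) ⟨s, hs, hdist⟩

lemma pos_adj_pos_succ (n : ℕ) (ω : Ω) :
    (cayleyGraph E.S).Adj (E.pos n ω) (E.pos (n + 1) ω) :=
  cayleyGraph_adj_mul E.one_not_mem (E.mem_S (n + 1) n.succ_pos ω) _

lemma dist_succ_of_pos_eq_one {n : ℕ} {ω : Ω} (h : E.pos n ω = 1) :
    E.dist (n + 1) ω = E.dist n ω + 1 := by
  have hstep := E.tree.dist_eq_dist_add_one_of_adj 1 (E.pos_adj_pos_succ n ω)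
  have hroot : (cayleyGraph E.S).dist 1 (E.pos n ω) = 0 := by rw [h, SimpleGraph.dist_self]
  unfold dist
  omega

lemma dist_succ_of_eq_gammaStep {n : ℕ} {ω : Ω} (h : E.pos n ω ≠ 1)
    (hg : E.g (n + 1) ω = E.gammaStep n ω) : E.dist (n + 1) ω + 1 = E.dist n ω := by
  rw [← (E.gammaStep_spec h).2, ← hg]
  rfl

lemma dist_succ_of_ne_gammaStep {n : ℕ} {ω : Ω} (h : E.pos n ω ≠ 1)
    (hg : E.g (n + 1) ω ≠ E.gammaStep n ω) : E.dist (n + 1) ω = E.dist n ω + 1 := by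
  obtain ⟨hγ, hγdist⟩ := E.gammaStep_spec h
  refine (E.tree.dist_eq_dist_add_one_of_adj 1 (E.pos_adj_pos_succ n ω)).resolve_left fun hback =>
    hg (mul_right_cancel (b := E.pos n ω) ?_)
  exact eq_of_adj_of_dist_add_one_eq E.tree (E.pos_adj_pos_succ n ω)
    (cayleyGraph_adj_mul E.one_not_mem hγ _) hback.symm hγdist

/-! ### Centred counts and centred distance -/

/-- The centred count `N n a - n / d`. -/
def countDev (a : G) (n : ℕ) (ω : Ω) : ℝ := (E.count a n ω : ℝ) - n / d

/-- The centred distance `Δ n - n (d - 2) / d`. -/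
def distDev (n : ℕ) (ω : Ω) : ℝ := (E.dist n ω : ℝ) - n * (((d : ℝ) - 2) / d)

/-- The centred distance, set to `0` when the walker is at the root, where `γ n` is a junk value. -/
def awayDev (n : ℕ) (ω : Ω) : ℝ := if E.pos n ω = 1 then 0 else E.distDev n ω

/-- The centred indicator `1(g n = γ) - 1 / d` that the `n`-th step is the (random) element `γ`. -/
def stepDev (γ : Ω → G) (n : ℕ) (ω : Ω) : ℝ := (if E.g n ω = γ ω then 1 else 0) - 1 / d

lemma count_succ (a : G) (n : ℕ) (ω : Ω) :
    E.count a (n + 1) ω = E.count a n ω + if E.g (n + 1) ω = a then 1 else 0 := by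
  unfold count
  rw [← Finset.insert_Icc_right_eq_Icc_add_one n.succ_pos, Finset.filter_insert]
  split_ifs
  · exact Finset.card_insert_of_notMem (by simp)
  · rfl

lemma countDev_succ (a : G) (n : ℕ) (ω : Ω) :
    E.countDev a (n + 1) ω = E.countDev a n ω + E.stepDev (fun _ => a) (n + 1) ω := by
  unfold countDev stepDev
  rw [E.count_succ]
  push_cast
  ring

lemma distDev_succ_of_pos_eq_one (hd : d ≠ 0) {n : ℕ} {ω : Ω} (h : E.pos n ω = 1) :
    E.distDev (n + 1) ω = E.distDev n ω + 2 / d := by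
  have hd0 : (d : ℝ) ≠ 0 := by exact_mod_cast hd
  unfold distDev
  rw [E.dist_succ_of_pos_eq_one h]
  push_cast
  field_simp
  ring

lemma distDev_succ_of_pos_ne_one (hd : d ≠ 0) {n : ℕ} {ω : Ω} (h : E.pos n ω ≠ 1) :
    E.distDev (n + 1) ω = E.distDev n ω - 2 * E.stepDev (E.gammaStep n) (n + 1) ω := by
  have hd0 : (d : ℝ) ≠ 0 := by exact_mod_cast hd
  unfold distDev stepDev
  split_ifs with hg
  · rw [← E.dist_succ_of_eq_gammaStep h hg]
    push_cast
    field_simp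
    ring
  · rw [E.dist_succ_of_ne_gammaStep h hg]
    push_cast
    field_simp
    ring

lemma sq_stepDev_le_one (γ : Ω → G) (n : ℕ) (ω : Ω) : E.stepDev γ n ω ^ 2 ≤ 1 := by
  have hd0 : 0 ≤ 1 / (d : ℝ) := by positivity
  have hd1 : 1 / (d : ℝ) ≤ 1 := by simpa using Nat.cast_inv_le_one d
  rw [sq_le_one_iff_abs_le_one, abs_le]
  unfold stepDev
  split_ifs <;> constructor <;> linarith

lemma sq_countDev_succ_le (a : G) (n : ℕ) (ω : Ω) :
    E.countDev a (n + 1) ω ^ 2 ≤ E.countDev a n ω ^ 2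
      + 2 * (E.countDev a n ω * E.stepDev (fun _ => a) (n + 1) ω) + 1 := by
  rw [E.countDev_succ]
  linarith [E.sq_stepDev_le_one (fun _ => a) (n + 1) ω]

lemma distDev_nonpos_of_pos_eq_one (hd : 2 ≤ d) {n : ℕ} {ω : Ω} (h : E.pos n ω = 1) :
    E.distDev n ω ≤ 0 := by
  have hd2 : 0 ≤ (d : ℝ) - 2 := sub_nonneg.2 (by exact_mod_cast hd)
  have hspeed : 0 ≤ n * (((d : ℝ) - 2) / d) := by positivity
  simpa [distDev, dist, h] using hspeed

lemma sq_distDev_succ_le (hd : 2 ≤ d) (n : ℕ) (ω : Ω) :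
    E.distDev (n + 1) ω ^ 2 ≤ E.distDev n ω ^ 2
      + -4 * (E.awayDev n ω * E.stepDev (E.gammaStep n) (n + 1) ω) + 4 := by
  unfold awayDev
  split_ifs with h
  · have hd2 : (2 : ℝ) ≤ d := by exact_mod_cast hd
    have hinc0 : 0 ≤ 2 / (d : ℝ) := by positivity
    have hinc1 : 2 / (d : ℝ) ≤ 1 := (div_le_one (by linarith)).2 hd2
    rw [E.distDev_succ_of_pos_eq_one (by omega) h]
    nlinarith [mul_nonpos_of_nonpos_of_nonneg (E.distDev_nonpos_of_pos_eq_one hd h) hinc0]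
  · rw [E.distDev_succ_of_pos_ne_one (by omega) h]
    linarith [E.sq_stepDev_le_one (E.gammaStep n) (n + 1) ω]

lemma sq_awayDev_le (n : ℕ) (ω : Ω) : E.awayDev n ω ^ 2 ≤ E.distDev n ω ^ 2 := by
  unfold awayDev
  split_ifs
  · simpa using sq_nonneg (E.distDev n ω)
  · exact le_rfl

lemma gammaStep_mem_of_awayDev_ne_zero {n : ℕ} {ω : Ω} (h : E.awayDev n ω ≠ 0) :
    E.gammaStep n ω ∈ E.S :=
  (E.gammaStep_spec fun hpos => h (if_pos hpos)).1

/-! ### Functions of the history -/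

/-- The first `n` steps of the walk, as a random element of a finite type. Being known at time `n`
is expressed by `Function.FactorsThrough · (E.history n)`. -/
def history (n : ℕ) (ω : Ω) (k : Finset.Icc 1 n) : E.S :=
  ⟨E.g k ω, E.mem_S k (Finset.mem_Icc.1 k.2).1 ω⟩

lemma history_eq_iff {n : ℕ} {ω ω' : Ω} :
    E.history n ω = E.history n ω' ↔ ∀ k ∈ Finset.Icc 1 n, E.g k ω = E.g k ω' := by
  simp only [funext_iff, Subtype.forall, history, Subtype.mk.injEq]

lemma preimage_history_singleton (n : ℕ) (ω : Ω) :
    E.history n ⁻¹' {E.history n ω} = {ω' | ∀ k ∈ Finset.Icc 1 n, E.g k ω' = E.g k ω} := by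
  ext ω'
  exact E.history_eq_iff

lemma measurableSet_preimage_history (n : ℕ) (t : Finset.Icc 1 n → E.S) :
    MeasurableSet (E.history n ⁻¹' {t}) := by
  have : E.history n ⁻¹' {t} = ⋂ k : Finset.Icc 1 n, {ω | E.g k ω = t k} := by
    ext ω
    simp [funext_iff, history, Subtype.ext_iff]
  rw [this]
  exact .iInter fun k => E.meas_g k _

lemma integrable_of_factorsThrough_history [IsFiniteMeasure P] {n : ℕ} {φ : Ω → ℝ}
    (hφ : φ.FactorsThrough (E.history n)) : Integrable φ P :=
  integrable_of_factorsThrough (E.measurableSet_preimage_history n) hφ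

lemma history_factorsThrough_succ (n : ℕ) :
    (E.history n).FactorsThrough (E.history (n + 1)) := fun _ _ h =>
  E.history_eq_iff.2 fun k hk =>
    E.history_eq_iff.1 h k (Finset.Icc_subset_Icc_right n.le_succ hk)

lemma g_succ_factorsThrough (n : ℕ) : (E.g (n + 1)).FactorsThrough (E.history (n + 1)) :=
  fun _ _ h => E.history_eq_iff.1 h (n + 1) (Finset.right_mem_Icc.2 n.succ_pos)

lemma pos_factorsThrough (n : ℕ) : (E.pos n).FactorsThrough (E.history n) := by
  induction n with
  | zero => exact fun _ _ _ => rfl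
  | succ n ih =>
    intro ω ω' h
    simp only [pos]
    rw [E.g_succ_factorsThrough n h, ih (E.history_factorsThrough_succ n h)]

lemma gammaStep_factorsThrough (n : ℕ) : (E.gammaStep n).FactorsThrough (E.history n) :=
  fun _ _ h => by simp only [gammaStep, dist, E.pos_factorsThrough n h]

lemma distDev_factorsThrough (n : ℕ) : (E.distDev n).FactorsThrough (E.history n) :=
  fun _ _ h => by simp only [distDev, dist, E.pos_factorsThrough n h]

lemma awayDev_factorsThrough (n : ℕ) : (E.awayDev n).FactorsThrough (E.history n) :=
  fun _ _ h => by simp only [awayDev, E.pos_factorsThrough n h, E.distDev_factorsThrough n h]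

lemma countDev_factorsThrough {n : ℕ} {γ : Ω → G} (hγ : γ.FactorsThrough (E.history n)) :
    (fun ω => E.countDev (γ ω) n ω).FactorsThrough (E.history n) := fun ω ω' h => by
  have hcount : E.count (γ ω) n ω = E.count (γ ω') n ω' := by
    unfold count
    rw [hγ h]
    exact congrArg Finset.card
      (Finset.filter_congr fun k hk => by rw [E.history_eq_iff.1 h k hk])
  simp only [countDev, hcount]

lemma stepDev_succ_factorsThrough {n : ℕ} {γ : Ω → G} (hγ : γ.FactorsThrough (E.history n)) :
    (E.stepDev γ (n + 1)).FactorsThrough (E.history (n + 1)) := fun _ _ h => by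
  simp only [stepDev, E.g_succ_factorsThrough n h, hγ (E.history_factorsThrough_succ n h)]

/-! ### The conditional law of the next step -/

lemma measureReal_history_inter_step (hd : 2 ≤ d) {n : ℕ} (hn : 1 ≤ n) (ω : Ω) {a : G}
    (ha : a ∈ E.S) :
    P.real (E.history n ⁻¹' {E.history n ω} ∩ {ω' | E.g (n + 1) ω' = a})
      = (1 / d + memoryCoeff p d / n * E.countDev a n ω)
        * P.real (E.history n ⁻¹' {E.history n ω}) := by
  have hd2 : (2 : ℝ) ≤ d := by exact_mod_cast hd
  have hd1 : (d : ℝ) - 1 ≠ 0 := by linarith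
  have hn0 : (n : ℝ) ≠ 0 := by positivity
  rw [E.preimage_history_singleton]
  refine (E.update n hn (fun k => E.g k ω) a ha).trans (congrArg (· * _) ?_)
  simp only [countDev, count, memoryCoeff]
  field_simp
  ring

section FiniteMeasure

variable [IsFiniteMeasure P]

lemma integrable_sq_countDev (a : G) (n : ℕ) : Integrable (fun ω => E.countDev a n ω ^ 2) P :=
  E.integrable_of_factorsThrough_history
    ((E.countDev_factorsThrough (γ := fun _ => a) fun _ _ _ => rfl).comp_left (· ^ 2))

lemma integrable_sq_distDev (n : ℕ) : Integrable (fun ω => E.distDev n ω ^ 2) P :=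
  E.integrable_of_factorsThrough_history ((E.distDev_factorsThrough n).comp_left (· ^ 2))

lemma integrable_mul_stepDev {n : ℕ} {φ : Ω → ℝ} {γ : Ω → G}
    (hφ : φ.FactorsThrough (E.history n)) (hγ : γ.FactorsThrough (E.history n)) :
    Integrable (fun ω => φ ω * E.stepDev γ (n + 1) ω) P :=
  E.integrable_of_factorsThrough_history (n := n + 1) fun _ _ h => by
    simp only [hφ (E.history_factorsThrough_succ n h), E.stepDev_succ_factorsThrough hγ h]

lemma integrable_mul_countDev {n : ℕ} {φ : Ω → ℝ} {γ : Ω → G}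
    (hφ : φ.FactorsThrough (E.history n)) (hγ : γ.FactorsThrough (E.history n)) :
    Integrable (fun ω => φ ω * E.countDev (γ ω) n ω) P :=
  E.integrable_of_factorsThrough_history (n := n) fun _ _ h => by
    simp only [hφ h, E.countDev_factorsThrough hγ h]

lemma setIntegral_step (hd : 2 ≤ d) {n : ℕ} (hn : 1 ≤ n) {φ : Ω → ℝ} {γ : Ω → G}
    (hφ : φ.FactorsThrough (E.history n)) (hγ : γ.FactorsThrough (E.history n))
    (hγS : ∀ ω, φ ω ≠ 0 → γ ω ∈ E.S) :
    ∫ ω in {ω | E.g (n + 1) ω = γ ω}, φ ω ∂P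
      = ∫ ω, φ ω * (1 / d + memoryCoeff p d / n * E.countDev (γ ω) n ω) ∂P := by
  refine setIntegral_eq_integral_mul_of_factorsThrough (E.measurableSet_preimage_history n) hφ
    (fun _ _ h => by simp only [E.countDev_factorsThrough hγ h]) fun ω hω => ?_
  rw [← E.measureReal_history_inter_step hd hn ω (hγS ω hω)]
  congr 1
  ext ω'
  refine and_congr_right fun hω' => ?_
  simp only [Set.mem_ofPred_eq, hγ hω']

lemma integral_mul_stepDev (hd : 2 ≤ d) {n : ℕ} (hn : 1 ≤ n) {φ : Ω → ℝ} {γ : Ω → G}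
    (hφ : φ.FactorsThrough (E.history n)) (hγ : γ.FactorsThrough (E.history n))
    (hγS : ∀ ω, φ ω ≠ 0 → γ ω ∈ E.S) :
    ∫ ω, φ ω * E.stepDev γ (n + 1) ω ∂P
      = memoryCoeff p d / n * ∫ ω, φ ω * E.countDev (γ ω) n ω ∂P := by
  set A := {ω | E.g (n + 1) ω = γ ω} with hA
  have hA_meas : MeasurableSet A :=
    measurableSet_of_factorsThrough (E.measurableSet_preimage_history (n + 1)) fun ω ω' h => by
      simp only [hA, Set.mem_ofPred_eq, E.g_succ_factorsThrough n h,
        hγ (E.history_factorsThrough_succ n h)]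
  have hφ_int : Integrable φ P := E.integrable_of_factorsThrough_history hφ
  have hφX_int : Integrable (fun ω => φ ω * E.countDev (γ ω) n ω) P :=
    E.integrable_mul_countDev hφ hγ
  have hsplit (ω : Ω) : φ ω * E.stepDev γ (n + 1) ω = A.indicator φ ω - 1 / d * φ ω := by
    simp only [stepDev, Set.indicator, hA, Set.mem_ofPred_eq]
    split_ifs <;> ring
  have hlaw (ω : Ω) : φ ω * (1 / d + memoryCoeff p d / n * E.countDev (γ ω) n ω)
      = 1 / d * φ ω + memoryCoeff p d / n * (φ ω * E.countDev (γ ω) n ω) := by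
    ring
  simp only [hsplit]
  rw [integral_sub (hφ_int.indicator hA_meas) (hφ_int.const_mul _), integral_indicator hA_meas,
    E.setIntegral_step hd hn hφ hγ hγS]
  simp only [hlaw]
  rw [integral_add (hφ_int.const_mul _) (hφX_int.const_mul _), add_sub_cancel_left,
    integral_const_mul]

end FiniteMeasure

/-! ### Second-moment recurrences -/

/-- The total second moment `V n` of the centred counts. -/
def countVar (n : ℕ) : ℝ := ∑ a ∈ E.S, ∫ ω, E.countDev a n ω ^ 2 ∂P

lemma countVar_nonneg (n : ℕ) : 0 ≤ E.countVar n :=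
  Finset.sum_nonneg fun _ _ => integral_nonneg fun _ => sq_nonneg _

lemma neg_awayDev_mul_countDev_le (α : ℝ) (n : ℕ) (ω : Ω) :
    -4 * α * (E.awayDev n ω * E.countDev (E.gammaStep n ω) n ω)
      ≤ 1 / 2 * E.distDev n ω ^ 2 + 8 * α ^ 2 * ∑ a ∈ E.S, E.countDev a n ω ^ 2 := by
  by_cases hφ : E.awayDev n ω = 0
  · rw [hφ, zero_mul, mul_zero]
    positivity
  have hγ : E.countDev (E.gammaStep n ω) n ω ^ 2 ≤ ∑ a ∈ E.S, E.countDev a n ω ^ 2 :=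
    Finset.single_le_sum (f := fun a => E.countDev a n ω ^ 2) (fun _ _ => sq_nonneg _)
      (E.gammaStep_mem_of_awayDev_ne_zero hφ)
  calc -4 * α * (E.awayDev n ω * E.countDev (E.gammaStep n ω) n ω)
        ≤ 1 / 2 * E.awayDev n ω ^ 2 + 8 * α ^ 2 * E.countDev (E.gammaStep n ω) n ω ^ 2 := by
          linarith [sq_nonneg (E.awayDev n ω + 4 * α * E.countDev (E.gammaStep n ω) n ω)]
    _ ≤ _ := add_le_add (mul_le_mul_of_nonneg_left (E.sq_awayDev_le n ω) (by norm_num))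
          (mul_le_mul_of_nonneg_left hγ (by positivity))

lemma neg_integral_awayDev_mul_countDev_le [IsFiniteMeasure P] (α : ℝ) (n : ℕ) :
    -4 * α * ∫ ω, E.awayDev n ω * E.countDev (E.gammaStep n ω) n ω ∂P
      ≤ 1 / 2 * ∫ ω, E.distDev n ω ^ 2 ∂P + 8 * α ^ 2 * E.countVar n := by
  have hD := (E.integrable_sq_distDev n).const_mul (1 / 2)
  have hX (a : G) (_ : a ∈ E.S) := E.integrable_sq_countDev a n
  have hV := (integrable_finsetSum E.S hX).const_mul (8 * α ^ 2)
  rw [countVar, ← integral_finsetSum E.S hX, ← integral_const_mul, ← integral_const_mul,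
    ← integral_const_mul, ← integral_add hD hV]
  exact integral_mono ((E.integrable_mul_countDev (E.awayDev_factorsThrough n)
    (E.gammaStep_factorsThrough n)).const_mul _) (hD.add hV)
    (E.neg_awayDev_mul_countDev_le α n)

section ProbabilityMeasure

variable [IsProbabilityMeasure P]

lemma integral_sq_countDev_succ_le (hd : 2 ≤ d) {n : ℕ} (hn : 1 ≤ n) {a : G} (ha : a ∈ E.S) :
    ∫ ω, E.countDev a (n + 1) ω ^ 2 ∂P
      ≤ (1 + 2 * memoryCoeff p d / n) * ∫ ω, E.countDev a n ω ^ 2 ∂P + 1 := by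
  have hconst : (fun _ : Ω => a).FactorsThrough (E.history n) := fun _ _ _ => rfl
  have hX := E.countDev_factorsThrough hconst
  have hle := integral_le_add_mul_add (E.integrable_sq_countDev a (n + 1))
    (E.integrable_sq_countDev a n) (E.integrable_mul_stepDev hX hconst)
    (E.sq_countDev_succ_le a n)
  rw [E.integral_mul_stepDev hd hn hX hconst fun _ _ => ha] at hle
  simp only [← sq] at hle
  exact hle.trans_eq (by ring)

lemma countVar_succ_le (hd : 2 ≤ d) {n : ℕ} (hn : 1 ≤ n) :
    E.countVar (n + 1) ≤ (1 + 2 * memoryCoeff p d / n) * E.countVar n + d := by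
  calc E.countVar (n + 1)
        ≤ ∑ a ∈ E.S, ((1 + 2 * memoryCoeff p d / n) * ∫ ω, E.countDev a n ω ^ 2 ∂P + 1) :=
          Finset.sum_le_sum fun _ ha => E.integral_sq_countDev_succ_le hd hn ha
    _ = (1 + 2 * memoryCoeff p d / n) * E.countVar n + d := by
          rw [Finset.sum_add_distrib, ← Finset.mul_sum, Finset.sum_const, E.card_S, nsmul_one,
            countVar]

lemma integral_sq_distDev_succ_le (hd : 2 ≤ d) {n : ℕ} (hn : 1 ≤ n) :
    ∫ ω, E.distDev (n + 1) ω ^ 2 ∂P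
      ≤ (1 + 1 / 2 / n) * ∫ ω, E.distDev n ω ^ 2 ∂P
        + (8 * memoryCoeff p d ^ 2 * (E.countVar n / n) + 4) := by
  set α := memoryCoeff p d
  have hφ := E.awayDev_factorsThrough n
  have hγ := E.gammaStep_factorsThrough n
  have hle := integral_le_add_mul_add (E.integrable_sq_distDev (n + 1))
    (E.integrable_sq_distDev n) (E.integrable_mul_stepDev hφ hγ) (E.sq_distDev_succ_le hd n)
  rw [E.integral_mul_stepDev hd hn hφ hγ fun _ => E.gammaStep_mem_of_awayDev_ne_zero] at hle
  calc ∫ ω, E.distDev (n + 1) ω ^ 2 ∂P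
        ≤ ∫ ω, E.distDev n ω ^ 2 ∂P
          + (-4 * α * ∫ ω, E.awayDev n ω * E.countDev (E.gammaStep n ω) n ω ∂P) / n + 4 :=
          hle.trans_eq (by ring)
    _ ≤ ∫ ω, E.distDev n ω ^ 2 ∂P
          + (1 / 2 * ∫ ω, E.distDev n ω ^ 2 ∂P + 8 * α ^ 2 * E.countVar n) / n + 4 := by
          gcongr
          exact E.neg_integral_awayDev_mul_countDev_le α n
    _ = _ := by ring

lemma exists_rate_sq_mul_integral_sq_distDev_le (hd : 2 ≤ d) :
    ∃ C, 0 ≤ C ∧ ∀ n : ℕ, 1 ≤ n →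
      rate p d n ^ 2 * ∫ ω, E.distDev n ω ^ 2 ∂P ≤ C * (n : ℝ) ^ 2 := by
  obtain ⟨B, hB0, hB⟩ := exists_le_mul_growthFactor_of_driven_recurrence
    (y := fun n => ∫ ω, E.distDev n ω ^ 2 ∂P) one_half_lt_one d.cast_nonneg (by positivity)
    (by norm_num) E.countVar_nonneg (fun n => integral_nonneg fun _ => sq_nonneg _)
    (fun n hn => E.countVar_succ_le hd hn) (fun n hn => E.integral_sq_distDev_succ_le hd hn)
  obtain ⟨C, hC0, hC⟩ := exists_rate_sq_mul_growthFactor_le hd p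
  refine ⟨B * C, mul_nonneg hB0 hC0, fun n hn => ?_⟩
  set α := memoryCoeff p d
  calc rate p d n ^ 2 * ∫ ω, E.distDev n ω ^ 2 ∂P
        ≤ rate p d n ^ 2 * (B * (n * growthFactor (2 * α) n)) := by
          gcongr
          exact hB n hn
    _ = B * n * (rate p d n ^ 2 * growthFactor (2 * α) n) := by ring
    _ ≤ B * n * (C * n) := mul_le_mul_of_nonneg_left (hC n hn) (by positivity)
    _ = B * C * (n : ℝ) ^ 2 := by ring

end ProbabilityMeasure

end ERW

theorem erw_rate_upper_general
    {G : Type*} [Group G] [DecidableEq G] {Ω : Type*} [MeasurableSpace Ω]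
    {P : Measure Ω} [IsProbabilityMeasure P]
    {d : ℕ} (hd : 2 ≤ d) {p : ℝ} (E : ERW G d p Ω P) {m : ℝ} (hm0 : 0 ≤ m) (hm2 : m ≤ 2) :
    ∃ C : ℝ, 0 < C ∧ ∀ n : ℕ, 1 ≤ n →
      rate p d n ^ m *
        ∫ ω, |(E.dist n ω : ℝ) / n - ((d : ℝ) - 2) / d| ^ m ∂P ≤ C := by
  obtain ⟨C, hC0, hC⟩ := E.exists_rate_sq_mul_integral_sq_distDev_le hd
  refine ⟨1 + C, by positivity, fun n hn => ?_⟩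
  have hscale (ω : Ω) : rate p d n ^ m * |(E.dist n ω : ℝ) / n - ((d : ℝ) - 2) / d| ^ m
      = |rate p d n / n * E.distDev n ω| ^ m := by
    have hdev : rate p d n / n * E.distDev n ω
        = rate p d n * ((E.dist n ω : ℝ) / n - ((d : ℝ) - 2) / d) := by
      unfold ERW.distDev
      field_simp
    rw [hdev, abs_mul, abs_of_nonneg (rate_nonneg p d n),
      Real.mul_rpow (rate_nonneg p d n) (abs_nonneg _)]
  have hsq : Integrable (fun ω => (rate p d n / n * E.distDev n ω) ^ 2) P := by
    simpa only [mul_pow] using (E.integrable_sq_distDev n).const_mul _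
  rw [← integral_const_mul]
  simp only [hscale]
  refine (integral_abs_rpow_le_one_add_integral_sq hsq hm0 hm2).trans ?_
  simp only [mul_pow, div_pow, integral_const_mul]
  gcongr
  rw [div_mul_eq_mul_div, div_le_iff₀ (by positivity)]
  exact hC n hn

/-- for `p ∈ [0,1)` and any `m ∈ [1,2)`, there is `C > 0` such that
`E|Δ n / n - (d-2)/d|^m ≤ C * r n ^ (-m)` for all `n ≥ 1` (stated in the equivalent
product form `r n ^ m * E|⋯|^m ≤ C`, which avoids the degenerate value `r 1 = 0`
in the critical case). -/
theorem erw_rate_upper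
    {G : Type*} [Group G] [DecidableEq G] {Ω : Type*} [MeasurableSpace Ω]
    {P : Measure Ω} [IsProbabilityMeasure P]
    (d : ℕ) (hd : 3 ≤ d) (p : ℝ) (hp0 : 0 ≤ p) (hp1 : p < 1)
    (E : ERW G d p Ω P) (m : ℝ) (hm1 : 1 ≤ m) (hm2 : m < 2) :
    ∃ C : ℝ, 0 < C ∧ ∀ n : ℕ, 1 ≤ n →
      rate p d n ^ m *
        ∫ ω, |(E.dist n ω : ℝ) / n - ((d : ℝ) - 2) / d| ^ m ∂P ≤ C := by
  exact erw_rate_upper_general (by omega) E (by linarith) hm2.le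

end
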